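/- Let n ≥ 2 and let m = 2m₀+1 be odd with m₀ ≥ 1. Let H be a Hankel tensor of order m and dimension n with parameter vector h ∈ ℂ^{d+1}, d = (n−1)m, let s = ⌊d/2⌋, and let r = rank C_{d−s,s}(h). Suppose r ≤ 1 + (n−1)m₀ and there exists a nonzero f = (f_0,…,f_r) ∈ ker C_{d−r,r}(h) whose binary form f(x,y) = f_0 x^r + ⋯ + f_r y^r is squarefree as a homogeneous polynomial in ℂ[x,y]. Then rank_V(H) = rank_S(H) = rank(H) = brank_V(H) = brank_S(H) = brank(H) = r. -/

import Mathlib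

open scoped BigOperators
open MvPolynomial

noncomputable section

/-- An order-`m`, dimension-`n` complex tensor. -/
abbrev Tensor (m n : ℕ) := (Fin m → Fin n) → ℂ

/-- Tensors expressible as a sum of `r` rank-one tensors. -/
def cpSet (m n r : ℕ) : Set (Tensor m n) :=
  {T | ∃ u : Fin r → Fin m → Fin n → ℂ, ∀ i, T i = ∑ k, ∏ j, u k j (i j)}

/-- Tensors expressible as a sum of `r` symmetric rank-one tensors. -/
def symSet (m n r : ℕ) : Set (Tensor m n) :=
  {T | ∃ v : Fin r → Fin n → ℂ, ∀ i, T i = ∑ k, ∏ j, v k (i j)}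

/-- The Vandermonde vector `v(a,b) ∈ ℂ^n`, `v(a,b)_i = a^(n-1-i) * b^i`. -/
def vand (n : ℕ) (a b : ℂ) : Fin n → ℂ := fun i => a ^ (n - 1 - (i : ℕ)) * b ^ (i : ℕ)

/-- Tensors expressible as a sum of `r` Vandermonde rank-one tensors. -/
def vandSet (m n r : ℕ) : Set (Tensor m n) :=
  {T | ∃ ab : Fin r → ℂ × ℂ, ∀ i, T i = ∑ k, ∏ j, vand n (ab k).1 (ab k).2 (i j)}

/-- The cp rank of a tensor. -/
def cpRank {m n : ℕ} (T : Tensor m n) : ℕ := sInf {r | T ∈ cpSet m n r}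

/-- The symmetric rank of a tensor. -/
def symRank {m n : ℕ} (T : Tensor m n) : ℕ := sInf {r | T ∈ symSet m n r}

/-- The Vandermonde rank of a tensor. -/
def vandRank {m n : ℕ} (T : Tensor m n) : ℕ := sInf {r | T ∈ vandSet m n r}

/-- The border rank of a tensor (closure in the product topology). -/
def brank {m n : ℕ} (T : Tensor m n) : ℕ := sInf {r | T ∈ closure (cpSet m n r)}

/-- The symmetric border rank of a tensor. -/
def bSymRank {m n : ℕ} (T : Tensor m n) : ℕ := sInf {r | T ∈ closure (symSet m n r)}

/-- The border Vandermonde rank of a tensor. -/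
def bVandRank {m n : ℕ} (T : Tensor m n) : ℕ := sInf {r | T ∈ closure (vandSet m n r)}

/-- `T` is the Hankel tensor with parameter vector `h ∈ ℂ^{(n-1)m+1}`. -/
def IsHankel {m n : ℕ} (T : Tensor m n) (h : Fin ((n - 1) * m + 1) → ℂ) : Prop :=
  ∀ i : Fin m → Fin n, T i = h ⟨∑ j, (i j : ℕ), by
    have h1 : ∑ j, (i j : ℕ) ≤ ∑ _j : Fin m, (n - 1) :=
      Finset.sum_le_sum fun j _ => Nat.le_pred_of_lt (i j).isLt
    simp only [Finset.sum_const, Finset.card_univ, Fintype.card_fin, smul_eq_mul] at h1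
    exact Nat.lt_succ_of_le (h1.trans (le_of_eq (Nat.mul_comm m (n - 1))))⟩

/-- The `(d-r+1) × (r+1)` Hankel (catalecticant) matrix `C_{d-r,r}(h)` of `h ∈ ℂ^{d+1}`. -/
def hMat (d r : ℕ) (h : Fin (d + 1) → ℂ) : Matrix (Fin (d - r + 1)) (Fin (r + 1)) ℂ :=
  Matrix.of fun i j => if hij : (i : ℕ) + (j : ℕ) < d + 1 then h ⟨(i : ℕ) + (j : ℕ), hij⟩ else 0

/-- The binary form `f(x,y) = f_0 x^r + f_1 x^(r-1) y + ⋯ + f_r y^r`. -/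
def binForm (r : ℕ) (f : Fin (r + 1) → ℂ) : MvPolynomial (Fin 2) ℂ :=
  ∑ j : Fin (r + 1), C (f j) * X 0 ^ (r - (j : ℕ)) * X 1 ^ (j : ℕ)

/-- The binary form `h(x,y) = ∑_j binom(d,j) h_j x^j y^(d-j)` associated with `h ∈ ℂ^{d+1}`. -/
def assocForm (d : ℕ) (h : Fin (d + 1) → ℂ) : MvPolynomial (Fin 2) ℂ :=
  ∑ j : Fin (d + 1), C ((d.choose (j : ℕ) : ℂ) * h j) * X 0 ^ (j : ℕ) * X 1 ^ (d - (j : ℕ))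

/-- Parameter vectors of binary forms of Waring rank at most `r`. -/
def waringSet (d r : ℕ) : Set (Fin (d + 1) → ℂ) :=
  {h | ∃ ab : Fin r → ℂ × ℂ,
    assocForm d h = ∑ i, (C (ab i).1 * X 0 + C (ab i).2 * X 1) ^ d}

/-- The Waring rank of the binary form associated with `h`. -/
def waringRank (d : ℕ) (h : Fin (d + 1) → ℂ) : ℕ := sInf {r | h ∈ waringSet d r}

/-- The border Waring rank of the binary form associated with `h`. -/
def bWaringRank (d : ℕ) (h : Fin (d + 1) → ℂ) : ℕ := sInf {r | h ∈ closure (waringSet d r)}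


/-!
Sylvester's theorem: the squarefree form `f` splits into `r` pairwise non-proportional linear
factors, and `C_{d-r,r}(h) f = 0` makes `h` a combination `∑ c_k v(a_k, b_k)` of the Vandermonde
vectors at its projective roots, because these are `r` independent vectors in the `r`-dimensional
solution space. Absorbing `d`-th roots of the `c_k` into the points gives `rank_V(H) ≤ r`.

For the lower bound, `C_{d-s,s}(h) = Vᵀ diag(c) W` with Vandermonde matrices `V` and `W`. Hence
every catalecticant has rank at most that of `diag(c)`, with equality once `V` and `W` have at least
`r` columns. One of these is a submatrix of a flattening of `H`, whose rank bounds the border rank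
from below because matrix rank is lower semicontinuous.
-/

section MatrixRank

variable {K : Type*} [Field K] {ι κ l m n : Type*}

lemma rank_mul_of_linearIndependent_row [Fintype m] [Fintype n] (A : Matrix l m K)
    {B : Matrix m n K} (hB : LinearIndependent K B.row) : (A * B).rank = A.rank := by
  have hrange : LinearMap.range B.mulVecLin = ⊤ := by
    apply Submodule.eq_top_of_finrank_eq
    rw [Module.finrank_fintype_fun_eq_card, ← hB.rank_matrix, Matrix.rank]
  rw [Matrix.rank, Matrix.mulVecLin_mul, LinearMap.range_comp_of_range_eq_top _ hrange, Matrix.rank]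

lemma rank_transpose_mul_mul_of_linearIndependent_row [Fintype ι] [Fintype κ] [Finite m]
    [Fintype n] {A : Matrix ι m K} {B : Matrix κ n K} (hA : LinearIndependent K A.row)
    (hB : LinearIndependent K B.row) (D : Matrix ι κ K) : (A.transpose * D * B).rank = D.rank := by
  have := Fintype.ofFinite m
  rw [rank_mul_of_linearIndependent_row _ hB, ← Matrix.rank_transpose, Matrix.transpose_mul,
    Matrix.transpose_transpose, rank_mul_of_linearIndependent_row _ hA, Matrix.rank_transpose]

end MatrixRank

lemma isClosed_setOf_matrix_rank_le {𝕜 m n : Type*} [NontriviallyNormedField 𝕜] [CompleteSpace 𝕜]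
    [Finite m] [Fintype n] (q : ℕ) : IsClosed {A : Matrix m n 𝕜 | A.rank ≤ q} := by
  classical
  have := Fintype.ofFinite m
  let toCLM : Matrix m n 𝕜 →ₗ[𝕜] (n → 𝕜) →L[𝕜] (m → 𝕜) :=
    LinearMap.toContinuousLinearMap.toLinearMap ∘ₗ Matrix.toLin'.toLinearMap
  have hopen := (isOpen_setOfPred_nat_le_rank (𝕜 := 𝕜) (E := n → 𝕜) (F := m → 𝕜) (q + 1)).preimage
    toCLM.continuous_of_finiteDimensional
  convert hopen.isClosed_compl using 1
  ext A
  have hrank : (Matrix.toLin' A).rank = A.rank := (Module.finrank_eq_rank _ _).symm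
  simp only [Set.mem_ofPred_eq, Set.mem_compl_iff, Set.mem_preimage]
  change _ ↔ ¬ ((q + 1 : ℕ) : Cardinal) ≤ (Matrix.toLin' A).rank
  rw [hrank, Nat.cast_le, Nat.succ_le_iff, not_lt]

section LinearForms

variable {K : Type*} [Field K] {ι : Type*}

/-- The vectors `p k` are homogeneous coordinates of pairwise distinct points of the projective
line. -/
structure ProjDistinct (p : ι → K × K) : Prop where
  ne_zero : ∀ k, p k ≠ 0
  cross_ne_zero : Pairwise fun k l => (p k).1 * (p l).2 - (p l).1 * (p k).2 ≠ 0

/-- The linear form whose zero on the projective line is the point with coordinates `p`. -/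
def linForm (p : K × K) : MvPolynomial (Fin 2) K := C p.2 * X 0 - C p.1 * X 1

lemma eval_linForm_self (p : K × K) : eval ![p.1, p.2] (linForm p) = 0 := by
  simp [linForm, mul_comm]

lemma not_isUnit_linForm (p : K × K) : ¬ IsUnit (linForm p) := fun h => by
  simpa [eval_linForm_self] using h.map (eval ![p.1, p.2])

lemma linForm_dvd_linForm_of_cross_eq_zero {p q : K × K} (hp : p ≠ 0)
    (hpq : p.1 * q.2 - q.1 * p.2 = 0) : linForm p ∣ linForm q := by
  suffices h : ∃ t : K, q = t • p by
    obtain ⟨t, rfl⟩ := h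
    exact ⟨C t, by simp only [linForm, Prod.smul_fst, Prod.smul_snd, smul_eq_mul, C_mul]; ring⟩
  by_cases h1 : p.1 = 0
  · have h2 : p.2 ≠ 0 := fun h2 => hp (Prod.ext h1 h2)
    have hq : q.1 = 0 := by simpa [h1, h2] using hpq
    exact ⟨q.2 / p.2, by ext <;> simp [h1, h2, hq]⟩
  · refine ⟨q.1 / p.1, Prod.ext ?_ ?_⟩ <;>
      simp only [Prod.smul_fst, Prod.smul_snd, smul_eq_mul] <;> field_simp
    linear_combination hpq

lemma projDistinct_of_squarefree_prod_linForm [Fintype ι] {p : ι → K × K} (hp : ∀ k, p k ≠ 0)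
    (hsf : Squarefree (∏ k, linForm (p k))) : ProjDistinct p where
  ne_zero := hp
  cross_ne_zero k l hkl hcross := by
    classical
    refine not_isUnit_linForm (p k) (hsf _ ?_)
    calc linForm (p k) * linForm (p k)
      _ ∣ linForm (p k) * linForm (p l) :=
        mul_dvd_mul_left _ (linForm_dvd_linForm_of_cross_eq_zero (hp k) hcross)
      _ = ∏ i ∈ ({k, l} : Finset ι), linForm (p i) := by rw [Finset.prod_pair hkl]
      _ ∣ ∏ i, linForm (p i) := Finset.prod_dvd_prod_of_subset _ _ _ (Finset.subset_univ _)

lemma exists_homogenize_eq_C_mul_prod_linForm [IsAlgClosed K] {r : ℕ} {P : Polynomial K}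
    (hP : P.natDegree ≤ r) :
    ∃ (c : K) (p : Fin r → K × K), (∀ k, p k ≠ 0) ∧
      P.homogenize r = C c * ∏ k, linForm (p k) := by
  induction r generalizing P with
  | zero =>
    obtain ⟨c, rfl⟩ := Polynomial.natDegree_eq_zero.mp (Nat.le_zero.mp hP)
    exact ⟨c, Fin.elim0, fun k => k.elim0, by simp⟩
  | succ r ih =>
    -- If `P` has degree below `r + 1`, its homogenization has the root `(1 : 0)` at infinity.
    rcases hP.lt_or_eq with hlt | heq
    · obtain ⟨c, p, hp, hprod⟩ := ih (Nat.le_of_lt_succ hlt)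
      refine ⟨-c, Fin.cons (1, 0) p, Fin.cases (by simp) hp, ?_⟩
      have hmul := Polynomial.homogenize_mul P 1 (Nat.le_of_lt_succ hlt) (n := 1) (by simp)
      rw [mul_one, Polynomial.homogenize_one, pow_one, hprod] at hmul
      rw [hmul, Fin.prod_univ_succ]
      simp only [Fin.cons_zero, Fin.cons_succ, linForm, map_neg, map_zero, map_one]
      ring
    · obtain ⟨a, ha⟩ := IsAlgClosed.exists_root P
        (Polynomial.natDegree_pos_iff_degree_pos.mp (by omega)).ne'
      obtain ⟨Q, rfl⟩ := Polynomial.dvd_iff_isRoot.mpr ha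
      have hQ : Q.natDegree ≤ r := by
        have hQ0 : Q ≠ 0 := by rintro rfl; simp at heq
        rw [Polynomial.natDegree_mul (Polynomial.X_sub_C_ne_zero a) hQ0,
          Polynomial.natDegree_X_sub_C] at heq
        omega
      obtain ⟨c, p, hp, hprod⟩ := ih hQ
      refine ⟨c, Fin.cons (a, 1) p, Fin.cases (by simp) hp, ?_⟩
      have hmul := Polynomial.homogenize_mul Q _ hQ (Polynomial.natDegree_X_sub_C_le a)
      have hlin : (Polynomial.X - Polynomial.C a).homogenize 1 = linForm (a, 1) := by
        simp [linForm]
      rw [mul_comm, hmul, hprod, hlin, Fin.prod_univ_succ]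
      simp only [Fin.cons_zero, Fin.cons_succ]
      ring

theorem exists_eq_C_mul_prod_linForm [IsAlgClosed K] {r : ℕ}
    {F : MvPolynomial (Fin 2) K} (hF : F.IsHomogeneous r) :
    ∃ (c : K) (p : Fin r → K × K), (∀ k, p k ≠ 0) ∧ F = C c * ∏ k, linForm (p k) := by
  have hdeg : (aeval ![(Polynomial.X : Polynomial K), 1] F).natDegree ≤ r * 1 :=
    MvPolynomial.aeval_natDegree_le F hF.totalDegree_le _ (by simp [Fin.forall_fin_two])
  rw [← Polynomial.homogenize_eq_of_isHomogeneous hF rfl]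
  exact exists_homogenize_eq_C_mul_prod_linForm (by simpa using hdeg)

theorem exists_projDistinct_roots_of_squarefree [IsAlgClosed K] {r : ℕ}
    {F : MvPolynomial (Fin 2) K} (hF : F.IsHomogeneous r) (hsf : Squarefree F) :
    ∃ p : Fin r → K × K, ProjDistinct p ∧ ∀ k, eval ![(p k).1, (p k).2] F = 0 := by
  obtain ⟨c, p, hp, rfl⟩ := exists_eq_C_mul_prod_linForm hF
  refine ⟨p, projDistinct_of_squarefree_prod_linForm hp
    (hsf.squarefree_of_dvd (dvd_mul_left _ _)), fun k => ?_⟩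
  rw [map_mul, map_prod, Finset.prod_eq_zero (Finset.mem_univ k) (eval_linForm_self _), mul_zero]

end LinearForms

section Vandermonde

variable {K : Type*} [Field K]

/-- The matrix whose rows are the Vandermonde vectors `v(a, b)` of length `q` at the points
`(a, b) = p k`. -/
def pointVandermonde {ι : Type*} (p : ι → K × K) (q : ℕ) : Matrix ι (Fin q) K :=
  Matrix.rectVandermonde (fun k => (p k).2) (fun k => (p k).1) q

lemma pointVandermonde_apply {ι : Type*} (p : ι → ℂ × ℂ) (q : ℕ) (k : ι) (i : Fin q) :
    pointVandermonde p q k i = vand q (p k).1 (p k).2 i := by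
  rw [pointVandermonde, Matrix.rectVandermonde_apply, vand, Fin.val_rev, Nat.sub_sub,
    Nat.add_comm 1, mul_comm]

lemma pointVandermonde_row {ι : Type*} (p : ι → ℂ × ℂ) (q : ℕ) (k : ι) :
    (pointVandermonde p q).row k = vand q (p k).1 (p k).2 :=
  funext (pointVandermonde_apply p q k)

lemma ProjDistinct.det_projVandermonde_ne_zero {r : ℕ} {p : Fin r → K × K} (hp : ProjDistinct p) :
    (Matrix.projVandermonde (fun k => (p k).2) (fun k => (p k).1)).det ≠ 0 := by
  rw [Matrix.det_projVandermonde]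
  refine Finset.prod_ne_zero_iff.mpr fun k _ => Finset.prod_ne_zero_iff.mpr fun l hl => ?_
  simpa only [mul_comm] using hp.cross_ne_zero (Finset.mem_Ioi.mp hl).ne

lemma ProjDistinct.linearIndependent_row_pointVandermonde {r q : ℕ} {p : Fin r → K × K}
    (hp : ProjDistinct p) (hrq : r ≤ q) : LinearIndependent K (pointVandermonde p q).row := by
  obtain ⟨t, rfl⟩ := Nat.exists_eq_add_of_le hrq
  rw [Fintype.linearIndependent_iff]
  intro c hc
  -- The columns `u, …, u + r - 1` form a square Vandermonde matrix with rescaled rows.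
  have hscaled (u w : ℕ) (huw : u + w = t) (k : Fin r) :
      c k * ((p k).1 ^ w * (p k).2 ^ u) = 0 := by
    refine congrFun (Matrix.eq_zero_of_vecMul_eq_zero hp.det_projVandermonde_ne_zero
      (v := fun l => c l * ((p l).1 ^ w * (p l).2 ^ u)) (funext fun i => ?_)) k
    have hcol := congrFun hc ⟨u + i, by omega⟩
    simp only [Finset.sum_apply, Pi.smul_apply, smul_eq_mul, Matrix.row, pointVandermonde,
      Matrix.rectVandermonde_apply, Fin.val_rev, Pi.zero_apply] at hcol
    rw [Pi.zero_apply, ← hcol, Matrix.vecMul, dotProduct]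
    refine Finset.sum_congr rfl fun l _ => ?_
    rw [Matrix.projVandermonde_apply, Fin.val_rev,
      show r + t - (u + i + 1) = w + (r - (i + 1)) by omega, pow_add, pow_add]
    ring
  intro k
  by_cases h1 : (p k).1 = 0
  · have h2 : (p k).2 ≠ 0 := fun h2 => hp.ne_zero k (Prod.ext h1 h2)
    simpa [h2] using hscaled t 0 (by omega) k
  · simpa [h1] using hscaled 0 t (by omega) k

end Vandermonde

section Multiplication

variable {K : Type*} [Field K]

/-- The matrix of multiplication by `P`, acting on row vectors of coefficients: row `i` holds the
coefficients of `X ^ i * P` in degrees below `b`. -/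
def mulMatrix (P : Polynomial K) (a b : ℕ) : Matrix (Fin a) (Fin b) K :=
  Matrix.of fun i l => (Polynomial.X ^ (i : ℕ) * P).coeff l

lemma linearIndependent_row_mulMatrix {P : Polynomial K} (hP : P ≠ 0) {a b : ℕ}
    (hab : a + P.natDegree ≤ b) : LinearIndependent K (mulMatrix P a b).row := by
  rw [Fintype.linearIndependent_iff]
  intro c hc
  have hsum : (∑ i : Fin a, Polynomial.C (c i) * Polynomial.X ^ (i : ℕ)) * P = 0 := by
    ext l
    rw [Finset.sum_mul, Polynomial.finsetSum_coeff, Polynomial.coeff_zero]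
    simp only [mul_assoc, Polynomial.coeff_C_mul]
    rcases lt_or_ge l b with hl | hl
    · simpa [mulMatrix, Matrix.row] using congrFun hc ⟨l, hl⟩
    · refine Finset.sum_eq_zero fun i _ => ?_
      rw [Polynomial.coeff_X_pow_mul', if_pos (by omega),
        Polynomial.coeff_eq_zero_of_natDegree_lt (by omega), mul_zero]
  intro i
  have hcoeff := congrArg (fun Q : Polynomial K => Q.coeff i)
    ((mul_eq_zero.mp hsum).resolve_right hP)
  simpa [Polynomial.finsetSum_coeff, Polynomial.coeff_X_pow, ← Fin.ext_iff] using hcoeff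

lemma finrank_ker_mulMatrix {P : Polynomial K} (hP : P ≠ 0) {a b : ℕ}
    (hab : a + P.natDegree ≤ b) :
    Module.finrank K (LinearMap.ker (mulMatrix P a b).mulVecLin) = b - a := by
  have hrank := (linearIndependent_row_mulMatrix hP hab).rank_matrix
  have hnullity := (mulMatrix P a b).mulVecLin.finrank_range_add_finrank_ker
  rw [Matrix.rank, Fintype.card_fin] at hrank
  rw [Module.finrank_fintype_fun_eq_card, Fintype.card_fin] at hnullity
  omega

end Multiplication

section Hankel

lemma hMat_apply {d s : ℕ} (hs : s ≤ d) (h : Fin (d + 1) → ℂ) (i : Fin (d - s + 1))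
    (j : Fin (s + 1)) : hMat d s h i j = h ⟨i + j, by omega⟩ :=
  dif_pos (by omega)

lemma vand_apply_add {d s : ℕ} (hs : s ≤ d) (a b : ℂ) (i : Fin (d - s + 1)) (j : Fin (s + 1)) :
    vand (d + 1) a b ⟨i + j, by omega⟩ = vand (d - s + 1) a b i * vand (s + 1) a b j := by
  have hexp : d + 1 - 1 - ((i : ℕ) + j) = (d - s + 1 - 1 - i) + (s + 1 - 1 - j) := by omega
  simp only [vand]
  rw [hexp, pow_add, pow_add]
  ring

lemma hMat_vand {d s : ℕ} (hs : s ≤ d) (a b : ℂ) :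
    hMat d s (vand (d + 1) a b) = Matrix.vecMulVec (vand (d - s + 1) a b) (vand (s + 1) a b) := by
  ext i j
  rw [hMat_apply hs, vand_apply_add hs, Matrix.vecMulVec_apply]

lemma eval_binForm (r : ℕ) (f : Fin (r + 1) → ℂ) (a b : ℂ) :
    eval ![a, b] (binForm r f) = vand (r + 1) a b ⬝ᵥ f := by
  simp only [binForm, dotProduct, vand, map_sum, map_mul, map_pow, eval_C, eval_X,
    Matrix.cons_val_zero, Matrix.cons_val_one, Nat.add_sub_cancel]
  exact Finset.sum_congr rfl fun j _ => by ring

lemma isHomogeneous_binForm (r : ℕ) (f : Fin (r + 1) → ℂ) : (binForm r f).IsHomogeneous r := by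
  refine IsHomogeneous.sum _ _ _ fun j _ => ?_
  have hmono := ((isHomogeneous_C (Fin 2) (f j)).mul (isHomogeneous_X_pow 0 (r - j))).mul
    (isHomogeneous_X_pow 1 j)
  rwa [show 0 + (r - (j : ℕ)) + j = r by omega] at hmono

lemma hMat_mulVec {d r : ℕ} (hrd : r ≤ d) (h : Fin (d + 1) → ℂ) (f : Fin (r + 1) → ℂ) :
    (hMat d r h).mulVec f =
      (mulMatrix (Polynomial.ofFn (r + 1) f) (d - r + 1) (d + 1)).mulVec h := by
  ext i
  simp only [Matrix.mulVec, dotProduct]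
  let shift (j : Fin (r + 1)) : Fin (d + 1) := ⟨i + j, by omega⟩
  refine Fintype.sum_of_injective shift (fun j j' hj => ?_) _ _ (fun l hl => ?_) fun j => ?_
  · simpa [shift, Fin.ext_iff] using hj
  · rw [mulMatrix, Matrix.of_apply, Polynomial.coeff_X_pow_mul']
    split_ifs with hil
    · have hlast : r + 1 ≤ l - i := by
        by_contra! hlt
        exact hl ⟨⟨l - i, hlt⟩, Fin.ext (by simp only [shift]; omega)⟩
      rw [Polynomial.ofFn_coeff_eq_zero_of_ge f hlast, zero_mul]
    · rw [zero_mul]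
  · have hcoeff := Polynomial.coeff_X_pow_mul (Polynomial.ofFn (r + 1) f) i j
    rw [Polynomial.ofFn_coeff_eq_val_of_lt f j.isLt, add_comm (j : ℕ)] at hcoeff
    rw [hMat_apply hrd, mulMatrix, Matrix.of_apply, hcoeff, mul_comm]

theorem exists_eq_vecMul_pointVandermonde {d r : ℕ} (hrd : r ≤ d) {f : Fin (r + 1) → ℂ}
    (hf : f ≠ 0) {p : Fin r → ℂ × ℂ} (hp : ProjDistinct p)
    (hroot : ∀ k, eval ![(p k).1, (p k).2] (binForm r f) = 0) {h : Fin (d + 1) → ℂ}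
    (hker : (hMat d r h).mulVec f = 0) :
    ∃ c : Fin r → ℂ, h = Matrix.vecMul c (pointVandermonde p (d + 1)) := by
  set P := Polynomial.ofFn (r + 1) f with hPdef
  have hP : P ≠ 0 := fun h0 => hf <| funext fun j => by
    rw [← Polynomial.ofFn_coeff_eq_val_of_lt f j.isLt, ← hPdef, h0]; rfl
  have hPdeg : P.natDegree < r + 1 := Polynomial.ofFn_natDegree_lt (by omega) f
  set W := LinearMap.ker (mulMatrix P (d - r + 1) (d + 1)).mulVecLin with hW
  have hmem (g : Fin (d + 1) → ℂ) : g ∈ W ↔ (hMat d r g).mulVec f = 0 := by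
    rw [hMat_mulVec hrd, hW, LinearMap.mem_ker, Matrix.mulVecLin_apply]
  have hli := hp.linearIndependent_row_pointVandermonde (q := d + 1) (by omega)
  have hle : Submodule.span ℂ (Set.range (pointVandermonde p (d + 1)).row) ≤ W := by
    rw [Submodule.span_le]
    rintro _ ⟨k, rfl⟩
    rw [SetLike.mem_coe, hmem, pointVandermonde_row, hMat_vand hrd, Matrix.vecMulVec_mulVec,
      ← eval_binForm, hroot]
    simp
  have hspan : Submodule.span ℂ (Set.range (pointVandermonde p (d + 1)).row) = W := by
    refine Submodule.eq_of_le_of_finrank_eq hle ?_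
    rw [finrank_span_eq_card hli, hW, finrank_ker_mulMatrix hP (by omega), Fintype.card_fin]
    omega
  obtain ⟨c, hc⟩ := (Submodule.mem_span_range_iff_exists_fun ℂ).mp (hspan ▸ (hmem h).mpr hker)
  exact ⟨c, by rw [Matrix.vecMul_eq_sum, ← hc]; rfl⟩

lemma hMat_vecMul_pointVandermonde {ι : Type*} [Fintype ι] [DecidableEq ι] {d s : ℕ} (hs : s ≤ d)
    (p : ι → ℂ × ℂ) (c : ι → ℂ) :
    hMat d s (Matrix.vecMul c (pointVandermonde p (d + 1))) =
      (pointVandermonde p (d - s + 1)).transpose * Matrix.diagonal c *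
        pointVandermonde p (s + 1) := by
  ext i j
  rw [hMat_apply hs, Matrix.mul_apply]
  simp only [Matrix.mul_diagonal, Matrix.transpose_apply, Matrix.vecMul, dotProduct,
    pointVandermonde_apply, vand_apply_add hs]
  exact Finset.sum_congr rfl fun k _ => by ring

lemma rank_hMat_vecMul_le {ι : Type*} [Fintype ι] [DecidableEq ι] {d s : ℕ} (hs : s ≤ d)
    (p : ι → ℂ × ℂ) (c : ι → ℂ) :
    (hMat d s (Matrix.vecMul c (pointVandermonde p (d + 1)))).rank ≤ (Matrix.diagonal c).rank := by
  rw [hMat_vecMul_pointVandermonde hs]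
  exact (Matrix.rank_mul_le_left _ _).trans (Matrix.rank_mul_le_right _ _)

lemma ProjDistinct.rank_hMat_vecMul {r d s : ℕ} {p : Fin r → ℂ × ℂ} (hp : ProjDistinct p)
    (hs : s ≤ d) (hrs : r ≤ s + 1) (hrds : r ≤ d - s + 1) (c : Fin r → ℂ) :
    (hMat d s (Matrix.vecMul c (pointVandermonde p (d + 1)))).rank = (Matrix.diagonal c).rank := by
  rw [hMat_vecMul_pointVandermonde hs]
  exact rank_transpose_mul_mul_of_linearIndependent_row
    (hp.linearIndependent_row_pointVandermonde hrds)
    (hp.linearIndependent_row_pointVandermonde hrs) _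

end Hankel

section Flattening

/-- The matricization of a tensor that groups the first `m₁` modes against the last `m₂`. -/
def flatten {m₁ m₂ n : ℕ} (T : Tensor (m₁ + m₂) n) :
    Matrix (Fin m₁ → Fin n) (Fin m₂ → Fin n) ℂ :=
  Matrix.of fun I J => T (Fin.append I J)

lemma rank_flatten_le_of_mem_cpSet {m₁ m₂ n q : ℕ} {T : Tensor (m₁ + m₂) n}
    (hT : T ∈ cpSet (m₁ + m₂) n q) : (flatten T).rank ≤ q := by
  obtain ⟨u, hu⟩ := hT
  have hfac : flatten T =
      (Matrix.of fun (I : Fin m₁ → Fin n) (k : Fin q) => ∏ j, u k (Fin.castAdd m₂ j) (I j)) *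
        Matrix.of fun (k : Fin q) (J : Fin m₂ → Fin n) => ∏ j, u k (Fin.natAdd m₁ j) (J j) := by
    ext I J
    simp only [flatten, Matrix.of_apply, Matrix.mul_apply, hu, Fin.prod_univ_add, Fin.append_left,
      Fin.append_right]
  rw [hfac]
  exact (Matrix.rank_mul_le_left _ _).trans
    ((Matrix.rank_le_card_width _).trans_eq (Fintype.card_fin q))

lemma rank_flatten_le_of_mem_closure_cpSet {m₁ m₂ n q : ℕ} {T : Tensor (m₁ + m₂) n}
    (hT : T ∈ closure (cpSet (m₁ + m₂) n q)) : (flatten T).rank ≤ q := by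
  have hcont : Continuous (flatten : Tensor (m₁ + m₂) n → _) :=
    continuous_matrix fun I J => continuous_apply (Fin.append I J)
  exact closure_minimal (fun _ => rank_flatten_le_of_mem_cpSet)
    ((isClosed_setOf_matrix_rank_le q).preimage hcont) hT

lemma exists_sum_fin_val_eq {n : ℕ} (hn : 0 < n) (m t : ℕ) (ht : t ≤ (n - 1) * m) :
    ∃ I : Fin m → Fin n, ∑ j, (I j : ℕ) = t := by
  induction m generalizing t with
  | zero => exact ⟨Fin.elim0, by simpa [eq_comm] using ht⟩
  | succ m ih =>
    rw [Nat.mul_succ] at ht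
    obtain ⟨I, hI⟩ := ih (t - min t (n - 1)) (by omega)
    refine ⟨Fin.cons ⟨min t (n - 1), by omega⟩ I, ?_⟩
    simp only [Fin.sum_univ_succ, Fin.cons_zero, Fin.cons_succ, hI]
    omega

lemma IsHankel.hMat_eq_submatrix_flatten {m₁ m₂ n : ℕ} (hn : 0 < n) {H : Tensor (m₁ + m₂) n}
    {h : Fin ((n - 1) * (m₁ + m₂) + 1) → ℂ} (hH : IsHankel H h) :
    ∃ I J, hMat ((n - 1) * (m₁ + m₂)) ((n - 1) * m₂) h = (flatten H).submatrix I J := by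
  have hd : (n - 1) * (m₁ + m₂) = (n - 1) * m₁ + (n - 1) * m₂ := Nat.mul_add _ _ _
  choose digits hdigits using exists_sum_fin_val_eq hn
  refine ⟨fun i => digits m₁ i (by omega), fun j => digits m₂ j (by omega), ?_⟩
  ext i j
  rw [hMat_apply (by omega), Matrix.submatrix_apply, flatten, Matrix.of_apply, hH]
  congr 2
  simp only [Fin.sum_univ_add, Fin.append_left, Fin.append_right]
  rw [hdigits, hdigits]

theorem IsHankel.rank_hMat_le_of_mem_closure_cpSet {m₁ m₂ n q : ℕ} (hn : 0 < n)
    {H : Tensor (m₁ + m₂) n} {h : Fin ((n - 1) * (m₁ + m₂) + 1) → ℂ} (hH : IsHankel H h)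
    (hcl : H ∈ closure (cpSet (m₁ + m₂) n q)) :
    (hMat ((n - 1) * (m₁ + m₂)) ((n - 1) * m₂) h).rank ≤ q := by
  obtain ⟨I, J, hsub⟩ := hH.hMat_eq_submatrix_flatten hn
  rw [hsub]
  exact (Matrix.rank_submatrix_le _ _ _).trans (rank_flatten_le_of_mem_closure_cpSet hcl)

end Flattening

section Ranks

lemma isHankel_prod_vand (m n : ℕ) (a b : ℂ) :
    IsHankel (fun i : Fin m → Fin n => ∏ j, vand n a b (i j)) (vand ((n - 1) * m + 1) a b) := by
  intro i
  simp only [vand, Finset.prod_mul_distrib, Finset.prod_pow_eq_pow_sum, Nat.add_sub_cancel]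
  rw [Finset.sum_tsub_distrib _ fun j _ => Nat.le_sub_one_of_lt (i j).isLt]
  simp [mul_comm]

lemma vand_mul_mul (d : ℕ) (z a b : ℂ) :
    vand (d + 1) (z * a) (z * b) = z ^ d • vand (d + 1) a b := by
  ext i
  have hpow : z ^ d = z ^ (d + 1 - 1 - i) * z ^ (i : ℕ) := by
    rw [← pow_add]
    congr 1
    omega
  simp only [vand, Pi.smul_apply, smul_eq_mul, mul_pow, hpow]
  ring

theorem IsHankel.mem_vandSet {m n r : ℕ} (hd : (n - 1) * m ≠ 0) {H : Tensor m n}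
    {p : Fin r → ℂ × ℂ} {c : Fin r → ℂ}
    (hH : IsHankel H (Matrix.vecMul c (pointVandermonde p ((n - 1) * m + 1)))) :
    H ∈ vandSet m n r := by
  choose z hz using fun k => IsAlgClosed.exists_pow_nat_eq (c k) (Nat.pos_of_ne_zero hd)
  refine ⟨fun k => (z k * (p k).1, z k * (p k).2), fun i => ?_⟩
  rw [hH i]
  simp only [Matrix.vecMul, dotProduct, pointVandermonde_apply]
  refine Finset.sum_congr rfl fun k _ => ?_
  have hprod := isHankel_prod_vand m n (z k * (p k).1) (z k * (p k).2) i
  rw [vand_mul_mul, hz, Pi.smul_apply, smul_eq_mul] at hprod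
  exact hprod.symm

lemma vandSet_subset_symSet (m n r : ℕ) : vandSet m n r ⊆ symSet m n r :=
  fun _ ⟨ab, h⟩ => ⟨fun k => vand n (ab k).1 (ab k).2, h⟩

lemma symSet_subset_cpSet (m n r : ℕ) : symSet m n r ⊆ cpSet m n r :=
  fun _ ⟨v, h⟩ => ⟨fun k _ => v k, h⟩

lemma ranks_eq_of_mem_vandSet {m n r : ℕ} {T : Tensor m n} (hT : T ∈ vandSet m n r)
    (hlow : ∀ q, T ∈ closure (cpSet m n q) → r ≤ q) :
    vandRank T = r ∧ symRank T = r ∧ cpRank T = r ∧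
      bVandRank T = r ∧ bSymRank T = r ∧ brank T = r := by
  have hVS := vandSet_subset_symSet m n
  have hSC := symSet_subset_cpSet m n
  have sandwich (S : ℕ → Set (Tensor m n)) (hlower : vandSet m n r ⊆ S r)
      (hupper : ∀ q, S q ⊆ closure (cpSet m n q)) : sInf {q | T ∈ S q} = r :=
    IsLeast.csInf_eq ⟨hlower hT, fun q hq => hlow q (hupper q hq)⟩
  exact ⟨sandwich _ subset_rfl fun q => ((hVS q).trans (hSC q)).trans subset_closure,
    sandwich _ (hVS r) fun q => (hSC q).trans subset_closure,
    sandwich _ ((hVS r).trans (hSC r)) fun q => subset_closure,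
    sandwich _ subset_closure fun q => closure_mono ((hVS q).trans (hSC q)),
    sandwich _ ((hVS r).trans subset_closure) fun q => closure_mono (hSC q),
    sandwich _ (((hVS r).trans (hSC r)).trans subset_closure) fun q => subset_rfl⟩

end Ranks

theorem stmt_11_general (n m s : ℕ) (hn : 2 ≤ n) (hm : 1 ≤ m) (H : Tensor m n)
    (h : Fin ((n - 1) * m + 1) → ℂ) (hH : IsHankel H h) (r : ℕ) (hs : s ≤ (n - 1) * m)
    (hr : r ≤ (hMat ((n - 1) * m) s h).rank) (hrm : r ≤ 1 + (n - 1) * (m / 2))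
    (f : Fin (r + 1) → ℂ) (hker : (hMat ((n - 1) * m) r h).mulVec f = 0)
    (hsf : Squarefree (binForm r f)) :
    vandRank H = r ∧ symRank H = r ∧ cpRank H = r ∧
      bVandRank H = r ∧ bSymRank H = r ∧ brank H = r := by
  obtain ⟨m₁, m₂, rfl, hrm₁, hle, hpos⟩ :
      ∃ m₁ m₂, m = m₁ + m₂ ∧ r ≤ (n - 1) * m₁ + 1 ∧ m₁ ≤ m₂ ∧ 1 ≤ m₂ :=
    ⟨m / 2, m - m / 2, by omega, by omega, by omega, by omega⟩
  have hd : (n - 1) * (m₁ + m₂) = (n - 1) * m₁ + (n - 1) * m₂ := Nat.mul_add _ _ _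
  have hle' : (n - 1) * m₁ ≤ (n - 1) * m₂ := Nat.mul_le_mul_left _ hle
  have hpos' : 0 < (n - 1) * m₂ := Nat.mul_pos (by omega) hpos
  have hf : f ≠ 0 := by
    rintro rfl
    simp [binForm] at hsf
  obtain ⟨p, hp, hroot⟩ :=
    exists_projDistinct_roots_of_squarefree (isHomogeneous_binForm r f) hsf
  obtain ⟨c, rfl⟩ := exists_eq_vecMul_pointVandermonde (by omega) hf hp hroot hker
  refine ranks_eq_of_mem_vandSet (hH.mem_vandSet (by omega)) fun q hq => ?_
  calc
    r ≤ (hMat _ s _).rank := hr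
    _ ≤ (Matrix.diagonal c).rank := rank_hMat_vecMul_le hs p c
    _ = (hMat _ ((n - 1) * m₂) _).rank :=
      (hp.rank_hMat_vecMul (by omega) (by omega) (by omega) c).symm
    _ ≤ q := hH.rank_hMat_le_of_mem_closure_cpSet (by omega) hq

/-- Odd order `m = 2m₀+1`: if `r ≤ 1+(n-1)m₀` and the kernel form is
squarefree, then all six ranks equal `r`. -/
theorem stmt_11 (n m₀ : ℕ) (hn : 2 ≤ n) (hm : 1 ≤ m₀)
    (H : Tensor (2 * m₀ + 1) n) (h : Fin ((n - 1) * (2 * m₀ + 1) + 1) → ℂ)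
    (hH : IsHankel H h)
    (r : ℕ)
    (hr : r = (hMat ((n - 1) * (2 * m₀ + 1)) ((n - 1) * (2 * m₀ + 1) / 2) h).rank)
    (hrs : r ≤ 1 + (n - 1) * m₀)
    (f : Fin (r + 1) → ℂ) (hf0 : f ≠ 0)
    (hker : (hMat ((n - 1) * (2 * m₀ + 1)) r h).mulVec f = 0)
    (hsf : Squarefree (binForm r f)) :
    vandRank H = r ∧ symRank H = r ∧ cpRank H = r ∧
      bVandRank H = r ∧ bSymRank H = r ∧ brank H = r := by
  exact stmt_11_general n (2 * m₀ + 1) _ hn (by omega) H h hH r (Nat.div_le_self _ 2) hr.le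
    (by rwa [show (2 * m₀ + 1) / 2 = m₀ by omega]) f hker hsf
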